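/- Let M be a path-connected topological space with basepoint ∗, let f : M → M be continuous, let k ≥ 1, and fix a path α in M from ∗ to f(∗). Let π = π₁(M, ∗) be the fundamental group, and define the endomorphism ρ : π → π by ρ([γ]) = [α · (f ∘ γ) · α⁻¹] (conjugate the f-image of a loop back to the basepoint along α). Let hoP_k(f) be the subspace of (C([0,1], M))^k consisting of tuples λ with f(λ_{i+1}(0)) = λ_i(1) for all i (indices mod k). Then the set of path components of hoP_k(f) is in bijection with the quotient of π by the equivalence relation y ∼ g · y · (ρ^k(g))⁻¹ (g ∈ π), i.e. with the set of ρ^k-twisted conjugacy classes of π, where ρ^k is the k-th iterate of ρ. -/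

import Mathlib

open unitInterval

/-- The homotopy `k`-periodic point space of `f : M → M`: the subspace of
`(C(I, M))^k` of tuples `λ` with `f (λ_{i+1}(0)) = λ_i(1)` (indices mod `k`). -/
def hoP {M : Type*} [TopologicalSpace M] (f : M → M) (k : ℕ) [NeZero k] :
    Set (Fin k → C(I, M)) :=
  {lam | ∀ i : Fin k, f ((lam (i + 1)) 0) = (lam i) 1}

attribute [local instance] Path.Homotopic.setoid

section Algebra

/-- Ordered product `A 0 * ρ (A 1) * ... * ρ^(n-1) (A (n-1))`. -/
def twProd {G : Type*} [Group G] (ρ : G →* G) (A : ℕ → G) : ℕ → G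
  | 0 => 1
  | n + 1 => twProd ρ A n * (⇑ρ)^[n] (A n)

theorem iter_mul {G : Type*} [Group G] (ρ : G →* G) (n : ℕ) (a b : G) :
    (⇑ρ)^[n] (a * b) = (⇑ρ)^[n] a * (⇑ρ)^[n] b := by
  simp

theorem iter_inv {G : Type*} [Group G] (ρ : G →* G) (n : ℕ) (a : G) :
    (⇑ρ)^[n] (a⁻¹) = ((⇑ρ)^[n] a)⁻¹ := by
  simp

theorem iter_one {G : Type*} [Group G] (ρ : G →* G) (n : ℕ) :
    (⇑ρ)^[n] 1 = 1 := by
  simp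

theorem twProd_tele {G : Type*} [Group G] (ρ : G →* G) (A B h : ℕ → G) (k : ℕ)
    (H : ∀ n < k, A n = h n * B n * (ρ (h (n + 1)))⁻¹) (n : ℕ) (hn : n ≤ k) :
    twProd ρ A n = h 0 * twProd ρ B n * ((⇑ρ)^[n] (h n))⁻¹ := by
  induction n with
  | zero => simp [twProd]
  | succ n ih =>
    rw [twProd, twProd, ih (by omega), H n (by omega)]
    simp only [iter_mul, iter_inv, Function.iterate_succ_apply]
    group

/-- extend a `Fin k` tuple to `ℕ` periodically. -/
def extN {G : Type*} {k : ℕ} [NeZero k] (A : Fin k → G) : ℕ → G := fun n => A (Fin.ofNat k n)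

theorem extN_succ {G : Type*} {k : ℕ} [NeZero k] (A : Fin k → G) (n : ℕ) :
    extN A (n + 1) = A (Fin.ofNat k n + 1) := by
  unfold extN
  congr 1
  ext
  simp [Fin.ofNat, Fin.add_def]

theorem extN_self {G : Type*} {k : ℕ} [NeZero k] (A : Fin k → G) :
    extN A k = extN A 0 := by
  unfold extN
  congr 1
  ext
  simp [Fin.ofNat]

theorem extN_val {G : Type*} {k : ℕ} [NeZero k] (A : Fin k → G) (i : Fin k) :
    extN A i = A i := by
  unfold extN
  congr 1
  ext
  simp [Fin.ofNat, Nat.mod_eq_of_lt i.2]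

/-- Backwards recursion. -/
def backSeq {G : Type*} [Group G] (ρ : G →* G) (A B : ℕ → G) (g : G) (k : ℕ) : ℕ → G
  | 0 => g
  | m + 1 => A (k - 1 - m) * ρ (backSeq ρ A B g k m) * (B (k - 1 - m))⁻¹

theorem twisted_iff {G : Type*} [Group G] (ρ : G →* G) {k : ℕ} [NeZero k] (A B : Fin k → G) :
    (∃ h : Fin k → G, ∀ i, A i = h i * B i * (ρ (h (i + 1)))⁻¹) ↔
      ∃ g, twProd ρ (extN A) k = g * twProd ρ (extN B) k * ((⇑ρ)^[k] g)⁻¹ := by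
  constructor
  · rintro ⟨h, H⟩
    refine ⟨extN h 0, ?_⟩
    have := twProd_tele ρ (extN A) (extN B) (extN h) k (fun n _ => by
      rw [extN_succ]; exact H _) k le_rfl
    rw [this, extN_self]
  · rintro ⟨g, hg⟩
    set q := backSeq ρ (extN A) (extN B) g k with hq
    have hstep : ∀ n < k, extN A n = q (k - n) * extN B n * (ρ (q (k - (n + 1))))⁻¹ := by
      intro n hn
      obtain ⟨m, rfl⟩ : ∃ m, k = n + 1 + m := ⟨k - (n + 1), by omega⟩
      have e1 : n + 1 + m - n = m + 1 := by omega
      have e2 : n + 1 + m - (n + 1) = m := by omega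
      have e3 : n + 1 + m - 1 - m = n := by omega
      rw [e1, e2, hq, backSeq, e3]
      group
    have h0 := twProd_tele ρ (extN A) (extN B) (fun n => q (k - n)) k hstep k le_rfl
    have hq0 : q 0 = g := rfl
    simp only [Nat.sub_zero, Nat.sub_self, hq0] at h0
    have hk : q k = g := by
      rw [hg] at h0
      exact (mul_right_cancel (mul_right_cancel h0)).symm
    refine ⟨fun i => q (k - i), fun i => ?_⟩
    have := hstep i i.2
    rw [extN_val, extN_val] at this
    rw [this]
    congr 3
    show q (k - (i + 1)) = q (k - (i + 1 : Fin k))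
    by_cases hi : (i : ℕ) + 1 < k
    · have : ((i + 1 : Fin k) : ℕ) = i + 1 := by
        rw [Fin.val_add, Fin.coe_ofNat_eq_mod, Nat.add_mod_mod, Nat.mod_eq_of_lt hi]
      rw [this]
    · have hi' : (i : ℕ) + 1 = k := by omega
      have : ((i + 1 : Fin k) : ℕ) = 0 := by
        rw [Fin.val_add, Fin.coe_ofNat_eq_mod, Nat.add_mod_mod, hi', Nat.mod_self]
      rw [this, hi']
      simp [hk, hq0]

theorem twProd_single {G : Type*} [Group G] (ρ : G →* G) {k : ℕ} [NeZero k] (y : G) :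
    twProd ρ (extN (Pi.mulSingle (0 : Fin k) y)) k = y := by
  have : ∀ n, n + 1 ≤ k → twProd ρ (extN (Pi.mulSingle (0 : Fin k) y)) (n + 1) = y := by
    intro n hn
    induction n with
    | zero => simp [twProd, extN, Pi.mulSingle]
    | succ n ih =>
      rw [twProd, ih (by omega)]
      have : extN (Pi.mulSingle (0 : Fin k) y) (n + 1) = 1 := by
        unfold extN
        apply Pi.mulSingle_eq_of_ne
        intro h
        have := congrArg Fin.val h
        simp [Fin.ofNat, Nat.mod_eq_of_lt (show n + 1 < k by omega)] at this
      rw [this, iter_one, mul_one]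
  obtain ⟨m, hm⟩ : ∃ m, k = m + 1 := ⟨k - 1, by have := NeZero.pos k; omega⟩
  have h := this m hm.ge
  rwa [← hm] at h

open CategoryTheory

/-- normalised loop. -/
def normLoop {C : Type*} [Groupoid C] (F : C ⥤ C) {b : C} (α : b ⟶ F.obj b)
    {x x' : C} (β : b ⟶ x) (β' : b ⟶ x') (L : x ⟶ F.obj x') : End b :=
  α ≫ F.map β' ≫ Groupoid.inv L ≫ Groupoid.inv β

theorem square_iff {C : Type*} [Groupoid C] (F : C ⥤ C) {b : C} (α : b ⟶ F.obj b)
    (ρ : End b →* End b) (hρ : ∀ g : b ⟶ b, ρ g = α ≫ F.map g ≫ Groupoid.inv α)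
    {x x' y y' : C} (β : b ⟶ x) (β' : b ⟶ x') (γ : b ⟶ y) (γ' : b ⟶ y')
    (L : x ⟶ F.obj x') (L' : y ⟶ F.obj y') (c : x ⟶ y) (c' : x' ⟶ y')
    (h h' : End b) (hc : h = γ ≫ Groupoid.inv c ≫ Groupoid.inv β)
    (hc' : h' = γ' ≫ Groupoid.inv c' ≫ Groupoid.inv β') :
    L ≫ F.map c' = c ≫ L' ↔
      normLoop F α β β' L = h * normLoop F α γ γ' L' * (ρ h')⁻¹ := by
  rw [eq_mul_inv_iff_mul_eq, End.mul_def, End.mul_def, hc, hρ, hc']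
  show _ ↔ @Eq (b ⟶ b) _ _
  simp only [normLoop, Groupoid.inv_eq_inv, Category.assoc, Functor.map_comp, Functor.map_inv,
    IsIso.inv_hom_id_assoc, cancel_epi]
  rw [← Category.assoc, ← Category.assoc (inv L'), cancel_mono,
    ← IsIso.inv_comp, ← IsIso.inv_comp, IsIso.inv_eq_inv]

theorem squares_iff {C : Type*} [Groupoid C] (F : C ⥤ C) {b : C} (α : b ⟶ F.obj b)
    (ρ : End b →* End b) (hρ : ∀ g : b ⟶ b, ρ g = α ≫ F.map g ≫ Groupoid.inv α)
    {k : ℕ} [NeZero k] {x y : Fin k → C} (β : ∀ i, b ⟶ x i) (γ : ∀ i, b ⟶ y i)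
    (L : ∀ i, x i ⟶ F.obj (x (i + 1))) (L' : ∀ i, y i ⟶ F.obj (y (i + 1))) :
    (∃ c : ∀ i, x i ⟶ y i, ∀ i, L i ≫ F.map (c (i + 1)) = c i ≫ L' i) ↔
      ∃ h : Fin k → End b, ∀ i, normLoop F α (β i) (β (i + 1)) (L i) =
        h i * normLoop F α (γ i) (γ (i + 1)) (L' i) * (ρ (h (i + 1)))⁻¹ := by
  constructor
  · rintro ⟨c, hc⟩
    refine ⟨fun i => γ i ≫ Groupoid.inv (c i) ≫ Groupoid.inv (β i), fun i => ?_⟩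
    exact (square_iff F α ρ hρ _ _ _ _ _ _ (c i) (c (i + 1)) _ _ rfl rfl).1 (hc i)
  · rintro ⟨h, hh⟩
    refine ⟨fun i => Groupoid.inv (β i) ≫ Groupoid.inv (X := b) (Y := b) (h i) ≫ γ i, fun i => ?_⟩
    refine (square_iff F α ρ hρ (β i) (β (i + 1)) (γ i) (γ (i + 1)) _ _ _ _ (h i) (h (i + 1)) ?_ ?_).2 (hh i)
    all_goals simp [Groupoid.inv_eq_inv]

theorem normLoop_surj {C : Type*} [Groupoid C] (F : C ⥤ C) {b : C} (α : b ⟶ F.obj b)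
    {x x' : C} (β : b ⟶ x) (β' : b ⟶ x') (a : End b) : ∃ L, normLoop F α β β' L = a := by
  refine ⟨Groupoid.inv β ≫ Groupoid.inv (X := b) (Y := b) a ≫ α ≫ F.map β', ?_⟩
  simp [normLoop, Groupoid.inv_eq_inv]

end Algebra
section Topo

variable {M : Type*} [TopologicalSpace M]

/-- element of `hoP` from paths. -/
def mkHoP {f : M → M} {k : ℕ} [NeZero k] (x : Fin k → M)
    (L : ∀ i, Path (x i) (f (x (i + 1)))) : hoP f k :=
  ⟨fun i => (L i).toContinuousMap, fun i => by simp⟩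

theorem mkHoP_congr {f : M → M} {k : ℕ} [NeZero k] {x x' : Fin k → M}
    {L : ∀ i, Path (x i) (f (x (i + 1)))} {L' : ∀ i, Path (x' i) (f (x' (i + 1)))}
    (h : ∀ i t, L i t = L' i t) : mkHoP x L = mkHoP x' L' := by
  apply Subtype.ext
  funext i
  ext t
  exact h i t

/-- starting points. -/
def hpt {f : M → M} {k : ℕ} [NeZero k] (lam : hoP f k) (i : Fin k) : M := lam.1 i 0

/-- paths. -/
def hpath {f : M → M} {k : ℕ} [NeZero k] (lam : hoP f k) (i : Fin k) :
    Path (hpt lam i) (f (hpt lam (i + 1))) :=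
  ⟨lam.1 i, rfl, (lam.2 i).symm⟩

theorem mkHoP_hpath {f : M → M} {k : ℕ} [NeZero k] (lam : hoP f k) :
    mkHoP (hpt lam) (hpath lam) = lam := rfl

theorem joined_family {f : M → M} {k : ℕ} [NeZero k] (x : I → Fin k → M)
    (L : ∀ s i, Path (x s i) (f (x s (i + 1))))
    (hL : ∀ i, Continuous (fun p : I × I => L p.1 i p.2)) :
    Joined (mkHoP (x 0) (L 0)) (mkHoP (x 1) (L 1)) := by
  refine ⟨⟨⟨fun s => mkHoP (x s) (L s), ?_⟩, rfl, rfl⟩⟩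
  refine Continuous.subtype_mk (continuous_pi fun i => ?_) _
  exact (ContinuousMap.curry ⟨_, hL i⟩).continuous

theorem joined_of_homotopic {f : M → M} {k : ℕ} [NeZero k] {x : Fin k → M}
    (L L' : ∀ i, Path (x i) (f (x (i + 1)))) (h : ∀ i, (L i).Homotopic (L' i)) :
    Joined (mkHoP x L) (mkHoP x L') := by
  have H : ∀ i, (L i).Homotopy (L' i) := fun i => (h i).some
  have := joined_family (fun _ => x) (fun s i => (H i).eval s) (fun i => (H i).continuous)
  simpa using this

/-- initial segment. -/
def initSeg {x y : M} (c : Path x y) (s : I) : Path x (c s) :=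
  ⟨⟨fun t => c (s * t), by fun_prop⟩, by simp, by simp⟩

theorem initSeg_one {x y : M} (c : Path x y) (t : I) : initSeg c 1 t = c t := by
  simp [initSeg]

theorem initSeg_zero {x y : M} (c : Path x y) (t : I) : initSeg c 0 t = x := by
  simp [initSeg]

theorem initSeg_cont {x y : M} (c : Path x y) : Continuous ↿(initSeg c) := by
  show Continuous fun p : I × I => c (p.1 * p.2)
  fun_prop

theorem trans_congr {x y z x' y' z' : M} {p : Path x y} {q : Path y z} {p' : Path x' y'}
    {q' : Path y' z'} (hp : ∀ t, p t = p' t) (hq : ∀ t, q t = q' t) (t : I) :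
    p.trans q t = p'.trans q' t := by
  simp only [Path.trans_apply, hp, hq]

theorem joined_of_squares {f : M → M} (hf : Continuous f) {k : ℕ} [NeZero k] {x y : Fin k → M}
    (L : ∀ i, Path (x i) (f (x (i + 1)))) (L' : ∀ i, Path (y i) (f (y (i + 1))))
    (c : ∀ i, Path (x i) (y i))
    (h : ∀ i, ((L i).trans ((c (i + 1)).map hf)).Homotopic ((c i).trans (L' i))) :
    Joined (mkHoP x L) (mkHoP y L') := by
  have hL : ∀ i, Continuous fun p : I × I => ((initSeg (c i) p.1).symm.trans
      ((L i).trans ((initSeg (c (i + 1)) p.1).map hf))) p.2 := by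
    intro i
    have h1 := Path.symm_continuous_family _ (initSeg_cont (c i))
    have h2 : Continuous ↿(fun _ : I => L i) := by
      show Continuous fun p : I × I => L i p.2
      fun_prop
    have h3 : Continuous ↿(fun s : I => (initSeg (c (i + 1)) s).map hf) :=
      hf.comp (initSeg_cont (c (i + 1)))
    have h4 := Path.trans_continuous_family _ h2 _ h3
    have h5 := Path.trans_continuous_family _ h1 _ h4
    exact h5
  have J := joined_family (fun s i => c i s)
    (fun s i => (initSeg (c i) s).symm.trans ((L i).trans ((initSeg (c (i + 1)) s).map hf))) hL
  have e0 : mkHoP (fun i => c i 0)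
      (fun i => (initSeg (c i) 0).symm.trans ((L i).trans ((initSeg (c (i + 1)) 0).map hf)))
      = mkHoP x (fun i => (Path.refl (x i)).symm.trans ((L i).trans ((Path.refl _).map hf))) :=
    mkHoP_congr fun i t => trans_congr (fun t => by simp [initSeg_zero])
      (trans_congr (fun _ => rfl) (fun t => by simp [initSeg_zero])) t
  have e1 : mkHoP (fun i => c i 1)
      (fun i => (initSeg (c i) 1).symm.trans ((L i).trans ((initSeg (c (i + 1)) 1).map hf)))
      = mkHoP y (fun i => (c i).symm.trans ((L i).trans ((c (i + 1)).map hf))) :=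
    mkHoP_congr fun i t => trans_congr (fun t => by simp [initSeg_one])
      (trans_congr (fun _ => rfl) (fun t => by simp [initSeg_one])) t
  rw [e0, e1] at J
  refine ((joined_of_homotopic _ _ fun i => ?_).trans J).trans (joined_of_homotopic _ _ fun i => ?_)
  · rw [← Path.Homotopic.Quotient.eq]
    have e : (Path.refl (x (i + 1))).map hf = Path.refl (f (x (i + 1))) := rfl
    rw [e]
    simp [Path.Homotopic.Quotient.mk_trans]
  · have := Path.Homotopic.Quotient.eq.2 (h i)
    rw [← Path.Homotopic.Quotient.eq]
    rw [Path.Homotopic.Quotient.mk_trans, this]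
    simp [← Path.Homotopic.Quotient.trans_assoc]

theorem square_homotopic (H : C(I × I, M)) {x y z w : M} (l : Path x y) (d : Path y w)
    (c : Path x z) (r : Path z w) (hl : ∀ t, H (0, t) = l t) (hd : ∀ t, H (t, 1) = d t)
    (hc : ∀ t, H (t, 0) = c t) (hr : ∀ t, H (1, t) = r t) :
    (l.trans d).Homotopic (c.trans r) := by
  let id' : Path (0 : I) 1 := ⟨ContinuousMap.id _, rfl, rfl⟩
  let p₁ : Path ((0, 0) : I × I) (1, 1) := ((Path.refl 0).prod id').trans (id'.prod (Path.refl 1))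
  let p₂ : Path ((0, 0) : I × I) (1, 1) := (id'.prod (Path.refl 0)).trans ((Path.refl 1).prod id')
  have : ContractibleSpace I :=
    (convex_Icc (0 : ℝ) 1).contractibleSpace ⟨0, by simp⟩
  have hp : p₁.Homotopic p₂ := SimplyConnectedSpace.paths_homotopic p₁ p₂
  obtain rfl : H (0, 0) = x := by simp [hl]
  obtain rfl : H (1, 1) = w := by simp [hr]
  have hm := hp.map H
  have e1 : p₁.map H.continuous = l.trans d := by
    ext t
    simp only [p₁, Path.map_trans]
    exact trans_congr (fun t => hl t) (fun t => hd t) t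
  have e2 : p₂.map H.continuous = c.trans r := by
    ext t
    simp only [p₂, Path.map_trans]
    exact trans_congr (fun t => hc t) (fun t => hr t) t
  rwa [e1, e2] at hm

theorem squares_of_joined {f : M → M} (hf : Continuous f) {k : ℕ} [NeZero k] {lam mu : hoP f k}
    (h : Joined lam mu) : ∃ c : ∀ i, Path (hpt lam i) (hpt mu i),
    ∀ i, ((hpath lam i).trans ((c (i + 1)).map hf)).Homotopic ((c i).trans (hpath mu i)) := by
  obtain ⟨P⟩ := h
  have hc : ∀ i, Continuous fun s => (P s).1 i :=
    fun i => (continuous_apply i).comp (continuous_subtype_val.comp P.continuous)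
  have hc2 : ∀ i, Continuous fun p : I × I => (P p.1).1 i p.2 := fun i =>
    ContinuousMap.continuous_uncurry_of_continuous ⟨_, hc i⟩
  refine ⟨fun i => ⟨⟨fun s => (P s).1 i 0, (hc2 i).comp (by fun_prop : Continuous fun s : I => (s, (0 : I)))⟩,
    by simp [hpt], by simp [hpt]⟩, fun i => ?_⟩
  refine square_homotopic ⟨_, hc2 i⟩ _ _ _ _ ?_ ?_ ?_ ?_
  · intro t; simp [hpath]; rfl
  · intro t; exact ((P t).2 i).symm
  · intro t; rfl
  · intro t; simp [hpath]; rfl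

end Topo
section Main

open CategoryTheory

theorem joined_iff {M : Type*} [TopologicalSpace M] {f : M → M} (hf : Continuous f)
    {k : ℕ} [NeZero k] (lam mu : hoP f k) :
    Joined lam mu ↔ ∃ c : ∀ i, FundamentalGroupoid.mk (hpt lam i) ⟶ FundamentalGroupoid.mk (hpt mu i),
      ∀ i, (show FundamentalGroupoid.mk (hpt lam i) ⟶
          (FundamentalGroupoid.map ⟨f, hf⟩).obj (FundamentalGroupoid.mk (hpt lam (i + 1))) from
          Path.Homotopic.Quotient.mk (hpath lam i)) ≫ (FundamentalGroupoid.map ⟨f, hf⟩).map (c (i + 1)) =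
        c i ≫ (show FundamentalGroupoid.mk (hpt mu i) ⟶
          (FundamentalGroupoid.map ⟨f, hf⟩).obj (FundamentalGroupoid.mk (hpt mu (i + 1))) from
          Path.Homotopic.Quotient.mk (hpath mu i)) := by
  constructor
  · intro h
    obtain ⟨c, hc⟩ := squares_of_joined hf h
    exact ⟨fun i => Path.Homotopic.Quotient.mk (c i), fun i =>
      Path.Homotopic.Quotient.eq.2 (hc i)⟩
  · rintro ⟨c, hc⟩
    choose c' hc' using fun i => Path.Homotopic.Quotient.mk_surjective (c i)
    refine joined_of_squares hf (hpath lam) (hpath mu) c' fun i => ?_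
    have := hc i
    rw [← hc', ← hc'] at this
    exact Path.Homotopic.Quotient.eq.1 this

end Main

open CategoryTheory in
/-- The set of path components of `hoP_k(f)` is in bijection with the set of
`ρ^k`-twisted conjugacy classes of `π = π₁(M, ∗)`, where
`ρ([γ]) = [α · (f ∘ γ) · α⁻¹]`. -/
theorem hoP_pathComponents_equiv_twisted_conjugacy_classes
    {M : Type u} [TopologicalSpace M] [PathConnectedSpace M] (star : M)
    (f : M → M) (hf : Continuous f) (k : ℕ) [NeZero k]
    (α : Path star (f star))
    (ρ : FundamentalGroup M star →* FundamentalGroup M star)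
    (hρ : ∀ γ : Path star star,
      ρ (FundamentalGroup.fromPath (X := TopCat.of M) ⟦γ⟧) =
        FundamentalGroup.fromPath (X := TopCat.of M)
          ⟦(α.trans (γ.map hf)).trans α.symm⟧) :
    Nonempty
      (ZerothHomotopy (hoP f k) ≃
        Quot (fun y z : FundamentalGroup M star =>
          ∃ g : FundamentalGroup M star, z = g * y * ((⇑ρ)^[k] g)⁻¹)) := by
  classical
  let F : FundamentalGroupoid M ⥤ FundamentalGroupoid M := FundamentalGroupoid.map ⟨f, hf⟩
  let b : FundamentalGroupoid M := FundamentalGroupoid.mk star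
  let a : b ⟶ F.obj b := Path.Homotopic.Quotient.mk α
  have hρ' : ∀ g : b ⟶ b, ρ g = a ≫ F.map g ≫ Groupoid.inv a := by
    intro g
    obtain ⟨γ, rfl⟩ := Path.Homotopic.Quotient.mk_surjective g
    rw [← Category.assoc]
    exact hρ γ
  let β : ∀ x : M, b ⟶ FundamentalGroupoid.mk x := fun x =>
    Path.Homotopic.Quotient.mk (PathConnectedSpace.somePath star x)
  let L : ∀ (lam : hoP f k) (i : Fin k), FundamentalGroupoid.mk (hpt lam i) ⟶
      F.obj (FundamentalGroupoid.mk (hpt lam (i + 1))) :=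
    fun lam i => Path.Homotopic.Quotient.mk (hpath lam i)
  let N : hoP f k → Fin k → FundamentalGroup M star := fun lam i =>
    normLoop F a (β (hpt lam i)) (β (hpt lam (i + 1))) (L lam i)
  let Φ : hoP f k → FundamentalGroup M star := fun lam => twProd ρ (extN (N lam)) k
  set R : FundamentalGroup M star → FundamentalGroup M star → Prop := fun y z =>
    ∃ g : FundamentalGroup M star, z = g * y * ((⇑ρ)^[k] g)⁻¹ with hR
  have key : ∀ lam mu : hoP f k, Joined lam mu ↔ R (Φ mu) (Φ lam) := by
    intro lam mu
    rw [joined_iff hf lam mu]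
    exact (squares_iff F a ρ hρ' (fun i => β (hpt lam i)) (fun i => β (hpt mu i))
      (L lam) (L mu)).trans (twisted_iff ρ (N lam) (N mu))
  have hequiv : Equivalence R := by
    refine ⟨fun y => ⟨1, ?_⟩, ?_, ?_⟩
    · rw [iter_one, inv_one, mul_one, one_mul]
    · rintro y z ⟨g, rfl⟩
      refine ⟨g⁻¹, ?_⟩
      rw [iter_inv]
      group
    · rintro y z w ⟨g, rfl⟩ ⟨h, rfl⟩
      refine ⟨h * g, ?_⟩
      rw [iter_mul]
      group
  have hsurj : ∀ y, ∃ lam, Φ lam = y := by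
    intro y
    let A : Fin k → FundamentalGroup M star := Pi.mulSingle 0 y
    choose l hl using fun i => normLoop_surj F a (β star) (β star) (A i)
    choose p hp using fun i => Path.Homotopic.Quotient.mk_surjective (X := M)
      (x₀ := star) (x₁ := f star) (l i)
    let lam : hoP f k := ⟨fun i => (p i).toContinuousMap, fun i => by simp⟩
    refine ⟨lam, ?_⟩
    have hN : N lam = A := by
      funext i
      rw [← hl i, ← hp i]
      have gen : ∀ (x x' : M) (q : Path x (f x')) (hx : x = star) (hx' : x' = star)
          (_ : ∀ t, q t = p i t),
          normLoop F a (β x) (β x') (show FundamentalGroupoid.mk x ⟶ F.obj (.mk x') from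
            Path.Homotopic.Quotient.mk q) = normLoop F a (β star) (β star)
            (show FundamentalGroupoid.mk star ⟶ F.obj (.mk star) from
            Path.Homotopic.Quotient.mk (p i)) := by
        rintro x x' q rfl rfl hq
        rw [show q = p i from Path.ext (funext hq)]
      exact gen _ _ (hpath lam i) (by simp [hpt, lam]) (by simp [hpt, lam]) (fun t => rfl)
    show twProd ρ (extN (N lam)) k = y
    rw [hN]
    exact twProd_single ρ y
  refine ⟨Equiv.ofBijective (Quotient.lift (fun lam => Quot.mk R (Φ lam)) ?_) ⟨?_, ?_⟩⟩
  · intro lam mu h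
    exact (Quot.sound ((key lam mu).1 h)).symm
  · intro u v
    induction u using Quotient.inductionOn with | _ lam =>
    induction v using Quotient.inductionOn with | _ mu =>
    intro h
    have h' : Quot.mk R (Φ mu) = Quot.mk R (Φ lam) := h.symm
    have := Quot.eqvGen_exact h'
    rw [hequiv.eqvGen_iff] at this
    exact Quotient.sound ((key lam mu).2 this)
  · intro u
    induction u using Quot.ind with | _ y =>
    obtain ⟨lam, rfl⟩ := hsurj y
    exact ⟨Quotient.mk _ lam, rfl⟩
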